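/- Let ε > 0 with ε² ≤ 1/3 and set α = 2⁸/ε⁴. There exists N₀ (depending only on ε) such that for all N ≥ N₀, every positive integer M with M³ = 32·N/ε⁴, and every ε-nonuniform probability distribution p on Fin N: Prob[ p_S ≥ (1 + ε²/2)·M/N ] ≥ (1/2)·exp(−α), where the probability is over M independent samples from p. -/

import Mathlib

open scoped Classical

/-!
`p_S` dominates the truncated sum `∑ a, min (p (s a)) t`, so only a lower tail bound for the latter
is needed. For `q = min p t`, the mean of `q` under `p` is `‖q‖₂² + t (1 - ‖q‖₁)`: the mass removed
by truncation is paid back at rate `t`, and as soon as `t` is at least of order `1 / N` this mean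
is still at least `(1 + ε²) / N`, the bound that Cauchy–Schwarz gives for `‖p‖₂²` itself. Since `q`
takes values in `[0, t]`, its variance is at most `t` times its mean. With `t` of order
`ε⁴ M / N`, Chebyshev's inequality bounds the probability of falling below `(1 + ε² / 2) M / N`,
and the two requirements on `t` are compatible once `M` is at least of order `1 / ε⁴`.
-/

section Truncation

variable {ι : Type*} [Fintype ι]

/-- The `L¹` distance from the weights `p` to the uniform distribution on `ι`. The weights are not
required to form a probability distribution, so that truncated ones are allowed. -/
noncomputable def l1DistUniform (p : ι → ℝ) : ℝ :=
  ∑ i, |p i - 1 / (Fintype.card ι : ℝ)|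

/-- The mean of `p i` truncated at level `t`, where `i` is itself drawn according to `p`. -/
noncomputable def truncatedMean (p : ι → ℝ) (t : ℝ) : ℝ :=
  ∑ i, p i * min (p i) t

lemma l1DistUniform_le_sum_abs_sub_add (p q : ι → ℝ) :
    l1DistUniform p ≤ ∑ i, |p i - q i| + l1DistUniform q := by
  rw [l1DistUniform, l1DistUniform, ← Finset.sum_add_distrib]
  exact Finset.sum_le_sum fun i _ ↦ abs_sub_le _ _ _

lemma sq_l1DistUniform_le [Nonempty ι] (q : ι → ℝ) :
    l1DistUniform q ^ 2 ≤ Fintype.card ι * ∑ i, q i ^ 2 - 2 * ∑ i, q i + 1 := by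
  have cauchy_schwarz : l1DistUniform q ^ 2 ≤
      Fintype.card ι * ∑ i, |q i - 1 / (Fintype.card ι : ℝ)| ^ 2 := by
    simpa only [l1DistUniform, Finset.card_univ] using sq_sum_le_card_mul_sum_sq (s := Finset.univ)
      (f := fun i ↦ |q i - 1 / (Fintype.card ι : ℝ)|)
  refine cauchy_schwarz.trans_eq ?_
  simp only [sq_abs, sub_sq, Finset.sum_add_distrib, Finset.sum_sub_distrib, ← Finset.sum_mul,
    ← Finset.mul_sum, Finset.sum_const, Finset.card_univ, nsmul_eq_mul]
  field_simp

lemma truncatedMean_eq_sum_sq_add (p : ι → ℝ) (t : ℝ) :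
    truncatedMean p t = ∑ i, min (p i) t ^ 2 + t * ∑ i, (p i - min (p i) t) := by
  rw [truncatedMean, Finset.mul_sum, ← Finset.sum_add_distrib]
  refine Finset.sum_congr rfl fun i _ ↦ ?_
  rcases le_total (p i) t with h | h
  · rw [min_eq_left h]; ring
  · rw [min_eq_right h]; ring

lemma one_add_sq_le_card_mul_truncatedMean [Nonempty ι] {p : ι → ℝ} {ε t : ℝ}
    (hsum : ∑ i, p i = 1) (hε : 0 ≤ ε) (hdist : ε ≤ l1DistUniform p)
    (ht : 2 * (1 + ε) ≤ Fintype.card ι * t) :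
    1 + ε ^ 2 ≤ Fintype.card ι * truncatedMean p t := by
  set q : ι → ℝ := fun i ↦ min (p i) t
  set η : ℝ := ∑ i, (p i - q i) with hη
  have removed_nonneg (i : ι) : 0 ≤ p i - q i := sub_nonneg.2 (min_le_left _ _)
  have η_nonneg : 0 ≤ η := Finset.sum_nonneg fun i _ ↦ removed_nonneg i
  have sum_q : ∑ i, q i = 1 - η := by rw [hη, Finset.sum_sub_distrib, hsum]; ring
  have dist_q : ε - η ≤ l1DistUniform q := by
    have := l1DistUniform_le_sum_abs_sub_add p q
    simp only [abs_of_nonneg (removed_nonneg _)] at this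
    linarith
  calc 1 + ε ^ 2
      ≤ 2 * ε * (ε - η) - ε ^ 2 + 2 * (1 - η) - 1 + 2 * (1 + ε) * η := by linarith
    _ ≤ 2 * ε * l1DistUniform q - ε ^ 2 + 2 * (1 - η) - 1 + Fintype.card ι * t * η := by gcongr
    _ ≤ l1DistUniform q ^ 2 + 2 * (1 - η) - 1 + Fintype.card ι * t * η := by
      linarith [two_mul_le_add_sq ε (l1DistUniform q)]
    _ ≤ Fintype.card ι * ∑ i, q i ^ 2 + Fintype.card ι * t * η := by
      linarith [sum_q ▸ sq_l1DistUniform_le q]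
    _ = Fintype.card ι * truncatedMean p t := by rw [truncatedMean_eq_sum_sq_add]; ring

end Truncation

section LowerTail

open MeasureTheory ProbabilityTheory

variable {κ Ω : Type*} [Fintype κ] [MeasurableSpace Ω] {μ : Measure Ω} [IsProbabilityMeasure μ]
  {f : Ω → ℝ} {r t : ℝ}

lemma measureReal_pi_sum_lt_le (hf : MemLp f 2 μ) (hr : r < Fintype.card κ * μ[f]) :
    (Measure.pi fun _ : κ ↦ μ).real {s | ∑ a, f (s a) < r} ≤
      Fintype.card κ * Var[f; μ] / (Fintype.card κ * μ[f] - r) ^ 2 := by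
  set P : Measure (κ → Ω) := Measure.pi fun _ ↦ μ
  set S : (κ → Ω) → ℝ := ∑ a, fun s ↦ f (s a) with hS
  have memLp_eval (a : κ) : MemLp (fun s : κ → Ω ↦ f (s a)) 2 P :=
    hf.comp_measurePreserving (measurePreserving_eval (fun _ ↦ μ) a)
  have memLp_S : MemLp S 2 P := memLp_finsetSum' _ fun a _ ↦ memLp_eval a
  have mean_S : P[S] = (Fintype.card κ : ℝ) * μ[f] := by
    simp only [hS, Finset.sum_apply]
    rw [integral_finsetSum _ fun a _ ↦ (memLp_eval a).integrable one_le_two]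
    simp only [P, integral_comp_eval (μ := fun _ : κ ↦ μ) hf.aestronglyMeasurable,
      Finset.sum_const, Finset.card_univ, nsmul_eq_mul]
  have var_S : Var[S; P] = Fintype.card κ * Var[f; μ] := by
    rw [hS, variance_sum_pi fun _ ↦ hf, Finset.sum_const, Finset.card_univ, nsmul_eq_mul]
  have subset_deviation :
      {s : κ → Ω | ∑ a, f (s a) < r} ⊆ {s | P[S] - r ≤ |S s - P[S]|} := by
    intro s (hs : ∑ a, f (s a) < r)
    have : S s < r := by rwa [hS, Finset.sum_apply]
    exact (by linarith : P[S] - r ≤ -(S s - P[S])).trans (neg_le_abs _)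
  rw [← mean_S] at hr ⊢
  rw [← var_S]
  refine (measureReal_mono subset_deviation).trans ?_
  exact ENNReal.toReal_le_of_le_ofReal (by positivity [variance_nonneg S P])
    (meas_ge_le_variance_div_sq memLp_S (sub_pos.2 hr))

lemma measureReal_pi_sum_lt_le_of_truncation (hf : Measurable f) (hf0 : ∀ x, 0 ≤ f x) (ht : 0 ≤ t)
    (hr : r < Fintype.card κ * ∫ x, min (f x) t ∂μ) :
    (Measure.pi fun _ : κ ↦ μ).real {s | ∑ a, f (s a) < r} ≤
      Fintype.card κ * (t * ∫ x, min (f x) t ∂μ) /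
        (Fintype.card κ * ∫ x, min (f x) t ∂μ - r) ^ 2 := by
  have mem_Icc : ∀ᵐ x ∂μ, min (f x) t ∈ Set.Icc 0 t :=
    .of_forall fun x ↦ ⟨le_min (hf0 x) ht, min_le_right _ _⟩
  have measurable_min : Measurable fun x ↦ min (f x) t := hf.min measurable_const
  have variance_le : Var[fun x ↦ min (f x) t; μ] ≤ t * ∫ x, min (f x) t ∂μ := by
    have := variance_le_sub_mul_sub mem_Icc measurable_min.aemeasurable
    nlinarith [sq_nonneg (∫ x, min (f x) t ∂μ)]
  have subset_truncated :
      {s : κ → Ω | ∑ a, f (s a) < r} ⊆ {s | ∑ a, min (f (s a)) t < r} := fun s hs ↦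
    (Finset.sum_le_sum fun a _ ↦ min_le_left (f (s a)) t).trans_lt hs
  calc _ ≤ _ := measureReal_mono subset_truncated
    _ ≤ _ := measureReal_pi_sum_lt_le
      (memLp_of_bounded mem_Icc measurable_min.aestronglyMeasurable 2) hr
    _ ≤ _ := by gcongr

end LowerTail

section FiniteSamples

open MeasureTheory

lemma sum_prod_real_singleton {κ : Type*} [Fintype κ] {α : κ → Type*}
    [∀ a, MeasurableSpace (α a)] [∀ a, MeasurableSingletonClass (α a)]
    (μ : ∀ a, Measure (α a)) [∀ a, IsFiniteMeasure (μ a)] (A : Finset (∀ a, α a)) :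
    ∑ s ∈ A, ∏ a, (μ a).real {s a} = (Measure.pi μ).real A := by
  rw [← sum_measureReal_singleton]
  simp only [measureReal_def, Measure.pi_singleton, ENNReal.toReal_prod]

variable {ι : Type*} [Fintype ι] {p : ι → ℝ}

lemma exists_isProbabilityMeasure_real_singleton_eq [MeasurableSpace ι] [MeasurableSingletonClass ι]
    (hp : ∀ i, 0 ≤ p i) (hsum : ∑ i, p i = 1) :
    ∃ μ : Measure ι, IsProbabilityMeasure μ ∧ ∀ i, μ.real {i} = p i := by
  have sum_ofReal : ∑ i, ENNReal.ofReal (p i) = 1 := by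
    rw [← ENNReal.ofReal_sum_of_nonneg fun i _ ↦ hp i, hsum, ENNReal.ofReal_one]
  refine ⟨(PMF.ofFintype _ sum_ofReal).toMeasure, inferInstance, fun i ↦ ?_⟩
  rw [measureReal_def, PMF.toMeasure_apply_singleton _ _ (measurableSet_singleton i),
    PMF.ofFintype_apply, ENNReal.toReal_ofReal (hp i)]

lemma one_sub_le_sum_prod_of_lt_mul_truncatedMean {M : ℕ} {r t : ℝ} (hp : ∀ i, 0 ≤ p i)
    (hsum : ∑ i, p i = 1) (ht : 0 ≤ t) (hr : r < M * truncatedMean p t) :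
    1 - M * (t * truncatedMean p t) / (M * truncatedMean p t - r) ^ 2 ≤
      ∑ s : Fin M → ι with r ≤ ∑ a, p (s a), ∏ a, p (s a) := by
  let _ : MeasurableSpace ι := ⊤
  obtain ⟨μ, _, hμ⟩ := exists_isProbabilityMeasure_real_singleton_eq hp hsum
  have mean_eq : ∫ i, min (p i) t ∂μ = truncatedMean p t := by
    simp only [integral_fintype .of_finite, hμ, smul_eq_mul, truncatedMean]
  have prob_eq : ∑ s : Fin M → ι with r ≤ ∑ a, p (s a), ∏ a, p (s a) =
      1 - (Measure.pi fun _ : Fin M ↦ μ).real {s | ∑ a, p (s a) < r} := by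
    rw [← probReal_compl_eq_one_sub .of_discrete]
    simpa [hμ, Set.compl_ofPred] using
      sum_prod_real_singleton (fun _ ↦ μ) {s : Fin M → ι | r ≤ ∑ a, p (s a)}
  have tail := measureReal_pi_sum_lt_le_of_truncation (κ := Fin M) (μ := μ) (f := p) (r := r)
    .of_discrete hp ht (by rwa [mean_eq, Fintype.card_fin])
  rw [mean_eq, Fintype.card_fin] at tail
  linarith

end FiniteSamples

lemma sq_mul_le_four_mul_one_add_mul_sq {x y : ℝ} (hx : 0 ≤ x) (hy : 1 + x ≤ y) :
    x ^ 2 * y ≤ 4 * (1 + x) * (y - (1 + x / 2)) ^ 2 := by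
  obtain ⟨v, hv, rfl⟩ : ∃ v, 0 ≤ v ∧ y = 1 + x + v := ⟨y - (1 + x), by linarith, by ring⟩
  have : 0 ≤ 4 * x * v + 3 * x ^ 2 * v + 4 * (1 + x) * v ^ 2 := by positivity
  linarith

lemma threshold_lt_mul_mean {x M N m : ℝ} (hx : 0 < x) (hM : 0 < M) (hN : 0 < N)
    (hm : 1 + x ≤ N * m) : (1 + x / 2) * M / N < M * m := by
  rw [div_lt_iff₀ hN]
  calc (1 + x / 2) * M < N * m * M := by gcongr; linarith
    _ = M * m * N := by ring

lemma chebyshev_bound_le {x δ M N m : ℝ} (hx : 0 < x) (hδ : 0 ≤ δ) (hM : 0 < M) (hN : 0 < N)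
    (hm : 1 + x ≤ N * m) :
    M * (δ * x ^ 2 * M / (4 * (1 + x) * N) * m) / (M * m - (1 + x / 2) * M / N) ^ 2 ≤ δ := by
  have gap_pos : 0 < M * m - (1 + x / 2) * M / N := sub_pos.2 (threshold_lt_mul_mean hx hM hN hm)
  rw [div_le_iff₀ (by positivity)]
  calc M * (δ * x ^ 2 * M / (4 * (1 + x) * N) * m)
      = δ * (M / N) ^ 2 / (4 * (1 + x)) * (x ^ 2 * (N * m)) := by field_simp
    _ ≤ δ * (M / N) ^ 2 / (4 * (1 + x)) * (4 * (1 + x) * (N * m - (1 + x / 2)) ^ 2) :=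
      mul_le_mul_of_nonneg_left (sq_mul_le_four_mul_one_add_mul_sq hx.le hm) (by positivity)
    _ = δ * (M * m - (1 + x / 2) * M / N) ^ 2 := by field_simp

theorem uniformity_test_main_lemma_general {ι : Type*} [Fintype ι] {ε δ : ℝ} (hε : 0 < ε)
    (hδ : 0 < δ) {M : ℕ} (hM : 8 * (1 + ε) * (1 + ε ^ 2) / (δ * ε ^ 4) ≤ M) {p : ι → ℝ}
    (hp : ∀ i, 0 ≤ p i) (hsum : ∑ i, p i = 1) (hdist : ε ≤ l1DistUniform p) :
    1 - δ ≤ ∑ s : Fin M → ι with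
      (1 + ε ^ 2 / 2) * (M : ℝ) / (Fintype.card ι : ℝ) ≤ ∑ a, p (s a), ∏ a, p (s a) := by
  have : Nonempty ι := by
    by_contra h
    simp [not_nonempty_iff.1 h] at hsum
  have card_pos : (0 : ℝ) < Fintype.card ι := by exact_mod_cast Fintype.card_pos
  have M_pos : (0 : ℝ) < M := lt_of_lt_of_le (by positivity) hM
  set t : ℝ := δ * (ε ^ 2) ^ 2 * M / (4 * (1 + ε ^ 2) * Fintype.card ι) with ht
  have level_large : 2 * (1 + ε) ≤ Fintype.card ι * t :=
    calc 2 * (1 + ε) = δ * ε ^ 4 / (4 * (1 + ε ^ 2)) *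
          (8 * (1 + ε) * (1 + ε ^ 2) / (δ * ε ^ 4)) := by field_simp; norm_num
      _ ≤ δ * ε ^ 4 / (4 * (1 + ε ^ 2)) * M := by gcongr
      _ = Fintype.card ι * t := by rw [ht]; field_simp
  have mean_large : 1 + ε ^ 2 ≤ Fintype.card ι * truncatedMean p t :=
    one_add_sq_le_card_mul_truncatedMean hsum hε.le hdist level_large
  have ε_sq_pos : 0 < ε ^ 2 := by positivity
  exact (sub_le_sub_left (chebyshev_bound_le ε_sq_pos hδ.le M_pos card_pos mean_large) 1).trans <|
    one_sub_le_sum_prod_of_lt_mul_truncatedMean hp hsum (by positivity)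
      (threshold_lt_mul_mean ε_sq_pos M_pos card_pos mean_large)

lemma div_pow_four_le_of_cube_eq {ε N M : ℝ} (hε : 0 < ε) (hM : 0 ≤ M)
    (hN : 8192 / ε ^ 8 ≤ N) (hMN : M ^ 3 = 32 * N / ε ^ 4) : 64 / ε ^ 4 ≤ M := by
  refine le_of_pow_le_pow_left₀ three_ne_zero hM ?_
  calc (64 / ε ^ 4) ^ 3 = 32 * (8192 / ε ^ 8) / ε ^ 4 := by field_simp; norm_num
    _ ≤ 32 * N / ε ^ 4 := by gcongr
    _ = M ^ 3 := hMN.symm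

/-- Main lemma for the Uniformity test: for any ε-nonuniform distribution `p`
on `Fin N` (with `N` large enough and `M³ = 32 N / ε⁴`), the random variable
`p_S` exceeds `(1 + ε²/2) M / N` with probability at least `(1/2)·exp(−α)`,
where `α = 2⁸/ε⁴`. -/
theorem uniformity_test_main_lemma
    (ε : ℝ) (hε : 0 < ε) (hε2 : ε ^ 2 ≤ 1 / 3) :
    ∃ N₀ : ℕ, ∀ N : ℕ, N₀ ≤ N → ∀ M : ℕ, 0 < M →
      (M : ℝ) ^ 3 = 32 * (N : ℝ) / ε ^ 4 →
      ∀ p : Fin N → ℝ, (∀ i, 0 ≤ p i) → (∑ i, p i = 1) →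
      (∑ i, |p i - 1 / (N : ℝ)| ≥ ε) →
      (∑ s ∈ Finset.univ.filter (fun s : Fin M → Fin N =>
          (1 + ε ^ 2 / 2) * (M : ℝ) / (N : ℝ) ≤ ∑ a, p (s a)),
        ∏ a, p (s a)) ≥ (1 / 2) * Real.exp (-(2 ^ 8 / ε ^ 4)) := by
  refine ⟨⌈8192 / ε ^ 8⌉₊, fun N hN M _ hMN p hp hsum hdist ↦ ?_⟩
  have ε_le_one : ε ≤ 1 := by nlinarith
  have M_large : 8 * (1 + ε) * (1 + ε ^ 2) / (1 / 2 * ε ^ 4) ≤ M :=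
    calc 8 * (1 + ε) * (1 + ε ^ 2) / (1 / 2 * ε ^ 4)
        ≤ 8 * (1 + 1) * (1 + 1 ^ 2) / (1 / 2 * ε ^ 4) := by gcongr
      _ = 64 / ε ^ 4 := by field_simp; norm_num
      _ ≤ M := div_pow_four_le_of_cube_eq hε M.cast_nonneg (Nat.ceil_le.1 hN) hMN
  have half_le := uniformity_test_main_lemma_general hε one_half_pos M_large hp hsum
    (by simpa only [l1DistUniform, Fintype.card_fin] using hdist)
  rw [Fintype.card_fin] at half_le
  have exp_le_one : Real.exp (-(2 ^ 8 / ε ^ 4)) ≤ 1 :=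
    Real.exp_le_one_iff.2 (neg_nonpos.2 (by positivity))
  linarith
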